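/- Convergence at strongly normal pointsystems: if f satisfies the regularity condition with V_r < ∞ for some r ≥ 1 and the nodes form a strongly normal pointsystem with constant c > 0 (v_k(t) ≥ c for all k, t), then for n ≥ r+1, ‖f - L_n[f]‖_∞ ≤ π^r V_r / (√c · (n-1)(n-2)···(n-r)). -/

import Mathlib

open Finset Polynomial MeasureTheory

/-- The `k`-th Lagrange basis polynomial for nodes `x : Fin n → ℝ`. -/
noncomputable def lagBasis {n : ℕ} (x : Fin n → ℝ) (k : Fin n) (t : ℝ) : ℝ :=
  ∏ j ∈ Finset.univ.erase k, (t - x j) / (x k - x j)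

/-- The Lagrange interpolant `L_n[f]`. -/
noncomputable def lagInterp {n : ℕ} (x : Fin n → ℝ) (f : ℝ → ℝ) (t : ℝ) : ℝ :=
  ∑ k, f (x k) * lagBasis x k t

/-- The node polynomial `ω(t) = ∏ (t - x_j)`. -/
noncomputable def omegaPoly {n : ℕ} (x : Fin n → ℝ) : Polynomial ℝ :=
  ∏ j, (Polynomial.X - Polynomial.C (x j))

/-- Fejér's function `v_k(t) = 1 - (t - x_k) ω''(x_k)/ω'(x_k)`. -/
noncomputable def fejerV {n : ℕ} (x : Fin n → ℝ) (k : Fin n) (t : ℝ) : ℝ :=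
  1 - (t - x k) *
    ((omegaPoly x).derivative.derivative.eval (x k) / (omegaPoly x).derivative.eval (x k))

/-- Integration by parts against a tail integral, for integrable factors. -/
theorem integral_mul_primitive_eq {K h : ℝ → ℝ} {a b : ℝ} (hab : a ≤ b)
    (hK : IntervalIntegrable K volume a b) (hh : IntervalIntegrable h volume a b) :
    ∫ y in a..b, K y * (∫ z in a..y, h z) = ∫ z in a..b, (∫ y in z..b, K y) * h z := by
  let F : ℝ → ℝ → ℝ := fun y z => {z | z ≤ y}.indicator (fun z => K y * h z) z
  have hF : IntegrableOn F.uncurry (Set.uIoc a b ×ˢ Set.uIoc a b) := by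
    have h1 : Integrable (fun p : ℝ × ℝ => K p.1 * h p.2)
        ((volume.restrict (Set.uIoc a b)).prod (volume.restrict (Set.uIoc a b))) :=
      Integrable.mul_prod hK.def' hh.def'
    rw [IntegrableOn, Measure.volume_eq_prod, ← Measure.prod_restrict]
    have h2 : MeasurableSet {p : ℝ × ℝ | p.2 ≤ p.1} :=
      measurableSet_le measurable_snd measurable_fst
    exact h1.indicator h2
  have hswap := intervalIntegral_intervalIntegral_swap hF
  have h1 : ∫ y in a..b, K y * (∫ z in a..y, h z) = ∫ y in a..b, ∫ z in a..b, F y z := by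
    refine intervalIntegral.integral_congr fun y hy => ?_
    rw [Set.uIcc_of_le hab] at hy
    simp only [F]
    rw [intervalIntegral.integral_indicator hy, intervalIntegral.integral_const_mul]
  have h2 : ∫ z in a..b, ∫ y in a..b, F y z = ∫ z in a..b, (∫ y in z..b, K y) * h z := by
    refine intervalIntegral.integral_congr fun z hz => ?_
    rw [Set.uIcc_of_le hab] at hz
    have h3 : ∀ y, F y z = (Set.Ici z).indicator (fun y => K y * h z) y := by
      intro y
      simp only [F, Set.indicator, Set.mem_ofPred_eq, Set.mem_Ici]
    have h5 : (fun y => F y z) = (Set.Ici z).indicator (fun y => K y * h z) := funext h3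
    simp only [h5]
    rw [intervalIntegral.integral_of_le hab, setIntegral_indicator measurableSet_Ici,
      ← intervalIntegral.integral_mul_const, intervalIntegral.integral_of_le hz.2]
    refine setIntegral_congr_set ?_
    have h4 : (Set.Ioc a b ∩ Set.Ici z : Set ℝ) =ᵐ[volume] (Set.Ioc a b ∩ Set.Ioi z : Set ℝ) :=
      Filter.EventuallyEq.inter (Filter.EventuallyEq.refl _ _) Ioi_ae_eq_Ici.symm
    have h6 : Set.Ioc a b ∩ Set.Ioi z = Set.Ioc z b := by
      ext y
      simp only [Set.mem_inter_iff, Set.mem_Ioc, Set.mem_Ioi]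
      constructor
      · rintro ⟨⟨_, h⟩, h'⟩
        exact ⟨h', h⟩
      · rintro ⟨h', h⟩
        exact ⟨⟨lt_of_le_of_lt hz.1 h', h⟩, h'⟩
    rwa [h6] at h4
  rw [h1, hswap, h2]

/-- Integration by parts against a mean-zero kernel. -/
theorem integral_mul_eq_integral_tail_mul {K H h : ℝ → ℝ} {a b : ℝ} (hab : a ≤ b)
    (hK : IntervalIntegrable K volume a b) (hK0 : ∫ y in a..b, K y = 0)
    (hh : IntervalIntegrable h volume a b)
    (hH : ∀ y ∈ Set.Icc a b, H y = H a + ∫ z in a..y, h z) :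
    ∫ y in a..b, K y * H y = ∫ z in a..b, (∫ y in z..b, K y) * h z := by
  rw [← integral_mul_primitive_eq hab hK hh]
  have hc : ContinuousOn (fun y => ∫ z in a..y, h z) (Set.uIcc a b) :=
    intervalIntegral.continuousOn_primitive_interval ((intervalIntegrable_iff').1 hh)
  have h1 : ∫ y in a..b, K y * H y = ∫ y in a..b, (H a * K y + K y * ∫ z in a..y, h z) := by
    refine intervalIntegral.integral_congr fun y hy => ?_
    rw [Set.uIcc_of_le hab] at hy
    simp only [hH y hy]
    ring
  rw [h1, intervalIntegral.integral_add (hK.const_mul _) (hK.mul_continuousOn hc),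
    intervalIntegral.integral_const_mul, hK0]
  ring

/-- Pairing a mean-zero kernel with a function of bounded variation. -/
theorem abs_integral_mul_le_variation {K g : ℝ → ℝ} {a b C M : ℝ} (hab : a ≤ b)
    (hK : IntervalIntegrable K volume a b) (hK0 : ∫ y in a..b, K y = 0)
    (hC : ∀ y ∈ Set.Icc a b, |K y| ≤ C)
    (hM : ∀ u ∈ Set.Icc a b, |∫ y in u..b, K y| ≤ M)
    (hKg : IntervalIntegrable (fun y => K y * g y) volume a b)
    (hBV : BoundedVariationOn g (Set.Icc a b)) :
    |∫ y in a..b, K y * g y| ≤ M * (eVariationOn g (Set.Icc a b)).toReal := by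
  set V := (eVariationOn g (Set.Icc a b)).toReal with hV
  have haI : a ∈ Set.Icc a b := ⟨le_rfl, hab⟩
  have hC0 : 0 ≤ C := (abs_nonneg _).trans (hC a haI)
  have hloc := hBV.locallyBoundedVariationOn
  set w := variationOnFromTo g (Set.Icc a b) a with hw
  have hosc : ∀ y ∈ Set.Icc a b, ∀ z ∈ Set.Icc a b, y ≤ z → |g z - g y| ≤ w z - w y := by
    intro y hy z hz hyz
    have h1 := variationOnFromTo.add hloc haI hy hz
    have h2 : |g z - g y| ≤ variationOnFromTo g (Set.Icc a b) y z := by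
      rw [variationOnFromTo.eq_of_le _ _ hyz, ← Real.dist_eq, dist_edist]
      exact ENNReal.toReal_mono (hloc y z hy hz)
        (eVariationOn.edist_le _ ⟨hz, hyz, le_rfl⟩ ⟨hy, le_rfl, hyz⟩)
    simp only [hw]
    linarith
  have hwb : w b - w a = V := by
    simp [hw, hV, variationOnFromTo.eq_of_le _ _ hab, variationOnFromTo.self]
  have hwm : ∀ y ∈ Set.Icc a b, ∀ z ∈ Set.Icc a b, y ≤ z → w y ≤ w z := by
    intro y hy z hz hyz
    have := hosc y hy z hz hyz
    linarith [abs_nonneg (g z - g y)]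
  have key : ∀ N : ℕ, 0 < N →
      |∫ y in a..b, K y * g y| ≤ M * V + C * V * (b - a) / N := by
    intro N hN
    have hN' : (0 : ℝ) < N := by exact_mod_cast hN
    set p : ℕ → ℝ := fun i => a + (b - a) * (i / N) with hp
    have hp0 : p 0 = a := by simp [hp]
    have hpN : p N = b := by simp [hp, hN'.ne']
    have hpm : Monotone p := by
      intro i j hij
      have : (i : ℝ) ≤ j := by exact_mod_cast hij
      simp only [hp]
      have : (0 : ℝ) ≤ b - a := by linarith
      gcongr
    have hpI : ∀ i ≤ N, p i ∈ Set.Icc a b := fun i hi =>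
      ⟨hp0 ▸ hpm (Nat.zero_le i), hpN ▸ hpm hi⟩
    have hps : ∀ i, p (i + 1) - p i = (b - a) / N := by
      intro i
      simp only [hp]
      push_cast
      field_simp
      ring
    have hsub : ∀ i < N, Set.uIcc (p i) (p (i + 1)) ⊆ Set.uIcc a b := by
      intro i hi
      rw [Set.uIcc_of_le (hpm i.le_succ), Set.uIcc_of_le hab]
      exact Set.Icc_subset_Icc (hpI i hi.le).1 (hpI (i + 1) hi).2
    have hKi : ∀ i < N, IntervalIntegrable K volume (p i) (p (i + 1)) := fun i hi =>
      hK.mono_set (hsub i hi)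
    have hKgi : ∀ i < N, IntervalIntegrable (fun y => K y * g y) volume (p i) (p (i + 1)) :=
      fun i hi => hKg.mono_set (hsub i hi)
    have hsplit : ∫ y in a..b, K y * g y
        = ∑ i ∈ range N, ∫ y in (p i)..(p (i + 1)), K y * g y := by
      rw [intervalIntegral.sum_integral_adjacent_intervals hKgi, hp0, hpN]
    set k : ℕ → ℝ := fun i => ∫ y in (p i)..b, K y with hk
    have hki : ∀ i < N, ∫ y in (p i)..(p (i + 1)), K y = k i - k (i + 1) := by
      intro i hi
      have h1 : IntervalIntegrable K volume (p (i + 1)) b := by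
        refine hK.mono_set ?_
        rw [Set.uIcc_of_le (hpI (i + 1) hi).2, Set.uIcc_of_le hab]
        exact Set.Icc_subset_Icc (hpI (i + 1) hi).1 le_rfl
      simp only [hk]
      rw [← intervalIntegral.integral_add_adjacent_intervals (hKi i hi) h1]
      ring
    have hpiece : ∀ i < N, |(∫ y in (p i)..(p (i + 1)), K y * g y) - g (p i) * (k i - k (i + 1))|
        ≤ C * (w (p (i + 1)) - w (p i)) * ((b - a) / N) := by
      intro i hi
      rw [← hki i hi, ← intervalIntegral.integral_const_mul,
        ← intervalIntegral.integral_sub (hKgi i hi) ((hKi i hi).const_mul _)]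
      have h1 : ∀ y ∈ Set.uIoc (p i) (p (i + 1)),
          ‖K y * g y - g (p i) * K y‖ ≤ C * (w (p (i + 1)) - w (p i)) := by
        intro y hy
        rw [Set.uIoc_of_le (hpm i.le_succ)] at hy
        have hyI : y ∈ Set.Icc a b :=
          ⟨(hpI i hi.le).1.trans hy.1.le, hy.2.trans (hpI (i + 1) hi).2⟩
        have h2 : K y * g y - g (p i) * K y = K y * (g y - g (p i)) := by ring
        rw [h2, Real.norm_eq_abs, abs_mul]
        refine mul_le_mul (hC y hyI) ?_ (abs_nonneg _) hC0
        linarith [hosc _ (hpI i hi.le) y hyI hy.1.le, hwm y hyI _ (hpI (i + 1) hi) hy.2]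
      have h3 := intervalIntegral.norm_integral_le_of_norm_le_const h1
      rwa [hps, Real.norm_eq_abs, abs_of_nonneg (a := (b - a) / N)
        (div_nonneg (by linarith) hN'.le)] at h3
    have habel : ∀ n, ∑ i ∈ range n, g (p i) * (k i - k (i + 1))
        = g (p 0) * k 0 - g (p n) * k n
          + ∑ i ∈ range n, (g (p (i + 1)) - g (p i)) * k (i + 1) := by
      intro n
      induction n with
      | zero => simp
      | succ n ih => rw [sum_range_succ, sum_range_succ, ih]; ring
    have hk0 : k 0 = 0 := by simp only [hk, hp0, hK0]
    have hkN : k N = 0 := by simp [hk, hpN]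
    have hvar : ∑ i ∈ range N, (w (p (i + 1)) - w (p i)) = V := by
      rw [sum_range_sub (fun i => w (p i)), hp0, hpN, hwb]
    have hmain : |∑ i ∈ range N, g (p i) * (k i - k (i + 1))| ≤ M * V := by
      rw [habel, hk0, hkN, mul_zero, mul_zero, sub_zero, zero_add, ← hvar, mul_sum]
      refine (abs_sum_le_sum_abs _ _).trans (sum_le_sum fun i hi => ?_)
      have hi' := mem_range.mp hi
      rw [abs_mul, mul_comm]
      exact mul_le_mul (hM _ (hpI (i + 1) hi'))
        (hosc _ (hpI i hi'.le) _ (hpI (i + 1) hi') (hpm i.le_succ)) (abs_nonneg _)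
        ((abs_nonneg _).trans (hM a haI))
    have herr : |∑ i ∈ range N, ((∫ y in (p i)..(p (i + 1)), K y * g y)
        - g (p i) * (k i - k (i + 1)))| ≤ C * V * (b - a) / N := by
      have h5 : C * V * (b - a) / N
          = ∑ i ∈ range N, C * (w (p (i + 1)) - w (p i)) * ((b - a) / N) := by
        rw [← sum_mul, ← mul_sum, hvar]
        ring
      rw [h5]
      exact (abs_sum_le_sum_abs _ _).trans
        (sum_le_sum fun i hi => hpiece i (mem_range.mp hi))
    rw [sum_sub_distrib, ← hsplit] at herr
    have h6 := abs_sub_abs_le_abs_sub (∫ y in a..b, K y * g y)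
      (∑ i ∈ range N, g (p i) * (k i - k (i + 1)))
    linarith
  have hlim : Filter.Tendsto (fun N : ℕ => M * V + C * V * (b - a) / N) Filter.atTop
      (nhds (M * V + 0)) :=
    tendsto_const_nhds.add (tendsto_const_div_atTop_nhds_zero_nat _)
  rw [add_zero] at hlim
  refine ge_of_tendsto hlim ?_
  filter_upwards [Filter.eventually_gt_atTop 0] with N hN using key N hN

theorem eval_lagrange_basis_eq_lagBasis {n : ℕ} (x : Fin n → ℝ) (k : Fin n) (t : ℝ) :
    (Lagrange.basis univ x k).eval t = lagBasis x k t := by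
  rw [Lagrange.basis, eval_prod, lagBasis]
  refine prod_congr rfl fun j _ => ?_
  simp [Lagrange.basisDivisor, div_eq_inv_mul]

theorem lagInterp_eq_eval_interpolate {n : ℕ} (x : Fin n → ℝ) (f : ℝ → ℝ) (t : ℝ) :
    lagInterp x f t = (Lagrange.interpolate univ x (fun k => f (x k))).eval t := by
  rw [Lagrange.interpolate_apply, eval_finsetSum, lagInterp]
  simp [eval_lagrange_basis_eq_lagBasis]

theorem lagInterp_eval_polynomial {n : ℕ} {x : Fin n → ℝ} (hx : Function.Injective x)
    {p : ℝ[X]} (hp : p.degree < n) (t : ℝ) :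
    lagInterp x (fun y => p.eval y) t = p.eval t := by
  rw [lagInterp_eq_eval_interpolate, ← Lagrange.eq_interpolate hx.injOn (by simpa using hp)]

theorem lagInterp_node {n : ℕ} {x : Fin n → ℝ} (hx : Function.Injective x) (f : ℝ → ℝ)
    (k : Fin n) : lagInterp x f (x k) = f (x k) := by
  rw [lagInterp_eq_eval_interpolate, Lagrange.eval_interpolate_at_node _ hx.injOn (mem_univ k)]

/-- The sign, beyond the nodes carrying the value `1`, of the interpolant of a step function.
The sign `σ` records on which side of the step these nodes lie. -/
theorem step_interpolant_mul_prod_nonneg {ι : Type*} [DecidableEq ι] (v : ι → ℝ) (P : ι → Prop)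
    [DecidablePred P] (σ t : ℝ) (s : Finset ι) (hv : Set.InjOn v s)
    (hsep : ∀ i ∈ s, ∀ j ∈ s, P i → ¬ P j → 0 < σ * (v i - v j))
    (ht : ∀ i ∈ s, P i → σ * (t - v i) ≤ 0) :
    0 ≤ (Lagrange.interpolate s v (fun i => if P i then 1 else 0)).eval t *
      ∏ j ∈ s with ¬ P j, σ * (t - v j) := by
  induction s using Finset.strongInduction with
  | H s ih =>
    by_cases h1 : ∀ i ∈ s, ¬ P i
    · rw [Lagrange.interpolate_eq_of_values_eq_on (r' := 0) _ (fun i hi => by simp [h1 i hi])]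
      simp
    by_cases h2 : ∀ i ∈ s, P i
    · push Not at h1
      obtain ⟨i, hi, -⟩ := h1
      rw [Lagrange.interpolate_eq_of_values_eq_on (r' := 1) _ (fun i hi => by simp [h2 i hi]),
        Lagrange.interpolate_one hv ⟨i, hi⟩, filter_false_of_mem (fun j hj => by simp [h2 j hj])]
      simp
    push Not at h1 h2
    obtain ⟨i, hi, hPi⟩ := h1
    obtain ⟨j, hj, hPj⟩ := h2
    have hij : i ≠ j := fun h => hPj (h ▸ hPi)
    have ihi := ih (s.erase i) (erase_ssubset hi) (hv.mono (by simp))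
      (fun a ha b hb => hsep a (mem_of_mem_erase ha) b (mem_of_mem_erase hb))
      (fun a ha => ht a (mem_of_mem_erase ha))
    have ihj := ih (s.erase j) (erase_ssubset hj) (hv.mono (by simp))
      (fun a ha b hb => hsep a (mem_of_mem_erase ha) b (mem_of_mem_erase hb))
      (fun a ha => ht a (mem_of_mem_erase ha))
    have hfi : {b ∈ s.erase i | ¬ P b} = {b ∈ s | ¬ P b} := by
      rw [filter_erase, erase_eq_of_notMem (by simp [hPi])]
    rw [hfi] at ihi
    have hfj : ∏ b ∈ s with ¬ P b, σ * (t - v b)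
        = σ * (t - v j) * ∏ b ∈ s.erase j with ¬ P b, σ * (t - v b) := by
      rw [filter_erase, mul_prod_erase _ (fun b => σ * (t - v b)) (by simp [hj, hPj])]
    rw [Lagrange.interpolate_eq_add_interpolate_erase _ hv hi hj hij, eval_add, eval_mul,
      eval_mul, add_mul]
    have hd := hsep i hi j hj hPi hPj
    have hti := ht i hi hPi
    have hne : v i - v j ≠ 0 := fun h => by simp [h] at hd
    have hσ : σ ≠ 0 := fun h => by simp [h] at hd
    have e1 : (Lagrange.basisDivisor (v i) (v j)).eval t * (σ * (t - v j))
        = (σ * (t - v j)) ^ 2 / (σ * (v i - v j)) := by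
      simp only [Lagrange.basisDivisor, eval_mul, eval_C, eval_sub, eval_X]
      field_simp
    have e2 : (Lagrange.basisDivisor (v j) (v i)).eval t
        = -(σ * (t - v i)) / (σ * (v i - v j)) := by
      have hne' : v j - v i ≠ 0 := by rw [← neg_sub]; exact neg_ne_zero.mpr hne
      simp only [Lagrange.basisDivisor, eval_mul, eval_C, eval_sub, eval_X]
      field_simp
      ring
    refine add_nonneg ?_ ?_
    · rw [hfj]
      have h3 := mul_nonneg ihj (div_nonneg (sq_nonneg (σ * (t - v j))) hd.le)
      rw [← e1] at h3
      linarith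
    · rw [e2]
      have h3 := mul_nonneg ihi (div_nonneg (neg_nonneg.mpr hti) hd.le)
      linarith

/-- Partial sums of Lagrange basis polynomials are bounded, beyond their own nodes, by the
basis polynomial of the extreme node. -/
theorem abs_sum_lagBasis_le {n : ℕ} {x : Fin n → ℝ} (hx : Function.Injective x) (P : Fin n → Prop)
    [DecidablePred P] (σ t : ℝ) (hσ : σ ≠ 0)
    (hsep : ∀ i j, P i → ¬ P j → 0 < σ * (x i - x j))
    (ht : ∀ i, P i → σ * (t - x i) < 0) (hnode : ∀ i, t ≠ x i) {M : ℝ} (hM0 : 0 ≤ M)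
    (hM : ∀ i, |lagBasis x i t| ≤ M) :
    |∑ k, (if P k then 1 else 0) * lagBasis x k t| ≤ M := by
  by_cases hP : ∀ i, ¬ P i
  · simpa [hP] using hM0
  push Not at hP
  obtain ⟨i₀, hi₀⟩ := hP
  obtain ⟨a, ha, hmin⟩ := exists_min_image (univ.filter P) (fun i => σ * x i) ⟨i₀, by simp [hi₀]⟩
  have hPa : P a := (mem_filter.mp ha).2
  have hconv : ∀ (Q : Fin n → Prop) [DecidablePred Q],
      (Lagrange.interpolate univ x (fun i => if Q i then (1 : ℝ) else 0)).eval t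
        = ∑ k, (if Q k then 1 else 0) * lagBasis x k t := by
    intro Q _
    rw [Lagrange.interpolate_apply, eval_finsetSum]
    refine sum_congr rfl fun k _ => ?_
    rw [eval_mul, eval_C, eval_lagrange_basis_eq_lagBasis]
  have hp := step_interpolant_mul_prod_nonneg x P σ t univ hx.injOn
    (fun i _ j _ => hsep i j) (fun i _ h => (ht i h).le)
  have hq := step_interpolant_mul_prod_nonneg x (fun i => P i ∧ i ≠ a) σ t univ hx.injOn
    (fun i _ j _ hi hj => by
      by_cases hPj : P j
      · have hja : j = a := by
          by_contra h
          exact hj ⟨hPj, h⟩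
        subst hja
        have h1 := hmin i (by simp [hi.1])
        have h2 : σ * (x i - x j) ≠ 0 :=
          mul_ne_zero hσ (sub_ne_zero.mpr (hx.ne hi.2))
        exact lt_of_le_of_ne (by linarith) h2.symm
      · exact hsep i j hi.1 hPj)
    (fun i _ h => (ht i h.1).le)
  rw [hconv] at hp hq
  set W := ∏ j with ¬ P j, σ * (t - x j) with hW
  have hW0 : W ≠ 0 := prod_ne_zero_iff.mpr fun j _ => mul_ne_zero hσ (sub_ne_zero.mpr (hnode j))
  have hfil : (univ.filter fun j => ¬ (P j ∧ j ≠ a)) = insert a (univ.filter fun j => ¬ P j) := by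
    ext j
    simp only [mem_filter, mem_univ, true_and, mem_insert]
    tauto
  rw [hfil, prod_insert (by simp [hPa]), ← hW] at hq
  set p := ∑ k, (if P k then 1 else 0) * lagBasis x k t with hpdef
  set q := ∑ k, (if P k ∧ k ≠ a then 1 else 0) * lagBasis x k t with hqdef
  have hpq : p = lagBasis x a t + q := by
    rw [hpdef, hqdef, ← add_sum_erase _ _ (mem_univ a), ← add_sum_erase (a := a) univ
      (fun k => (if P k ∧ k ≠ a then 1 else 0) * lagBasis x k t) (mem_univ a)]
    simp only [hPa, if_true, one_mul, ne_eq, not_true_eq_false, and_false, if_false, zero_mul,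
      zero_add]
    congr 1
    refine sum_congr rfl fun k hk => ?_
    simp [(mem_erase.mp hk).1]
  have hqW : q * W ≤ 0 := by
    have h1 := ht a hPa
    by_contra! h
    have h2 := mul_neg_of_neg_of_pos h1 h
    linarith
  have h1 : |p| * |W| ≤ |lagBasis x a t| * |W| := by
    rw [← abs_mul, ← abs_mul, abs_of_nonneg hp]
    refine le_trans ?_ (le_abs_self _)
    rw [hpq, add_mul]
    linarith
  exact (le_of_mul_le_mul_right h1 (abs_pos.mpr hW0)).trans (hM a)

theorem eq_zero_of_double_roots {n : ℕ} {x : Fin n → ℝ} (hx : Function.Injective x) {p : ℝ[X]}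
    (hdeg : p.natDegree < 2 * n) (h0 : ∀ j, p.eval (x j) = 0)
    (h1 : ∀ j, p.derivative.eval (x j) = 0) : p = 0 := by
  by_contra hp
  have hdvd : ∏ j, (X - C (x j)) ^ 2 ∣ p := by
    refine Finset.prod_dvd_of_coprime (fun i _ j _ hij => ?_) fun j _ => ?_
    · exact (pairwise_coprime_X_sub_C hx hij).pow
    · rw [← le_rootMultiplicity_iff hp]
      exact (one_lt_rootMultiplicity_iff_isRoot hp).mpr ⟨h0 j, h1 j⟩
  have h2 := natDegree_le_of_dvd hdvd hp
  rw [natDegree_prod_of_monic _ _ fun j _ => (monic_X_sub_C (x j)).pow 2] at h2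
  simp only [natDegree_pow, natDegree_X_sub_C, mul_one, sum_const, card_univ, Fintype.card_fin,
    smul_eq_mul] at h2
  omega

theorem eval_derivative_derivative_omegaPoly {n : ℕ} (x : Fin n → ℝ) (k : Fin n) :
    (omegaPoly x).derivative.derivative.eval (x k)
      = 2 * (Lagrange.nodal (univ.erase k) x).derivative.eval (x k) := by
  have h : omegaPoly x = (X - C (x k)) * Lagrange.nodal (univ.erase k) x :=
    Lagrange.nodal_eq_mul_nodal_erase (mem_univ k)
  rw [h]
  simp only [derivative_mul, derivative_sub, derivative_X, derivative_C, derivative_add, eval_add,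
    eval_mul, eval_sub, eval_X, eval_C, derivative_one, eval_one, eval_zero]
  simp
  ring

theorem eval_derivative_omegaPoly {n : ℕ} (x : Fin n → ℝ) (k : Fin n) :
    (omegaPoly x).derivative.eval (x k) = (Lagrange.nodal (univ.erase k) x).eval (x k) :=
  Lagrange.eval_nodal_derivative_eval_node_eq (mem_univ k)

theorem eval_derivative_basis_self {n : ℕ} (x : Fin n → ℝ) (k : Fin n) :
    2 * (Lagrange.basis univ x k).derivative.eval (x k)
      = (omegaPoly x).derivative.derivative.eval (x k) / (omegaPoly x).derivative.eval (x k) := by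
  rw [Lagrange.basis_eq_prod_sub_inv_mul_nodal_div (mem_univ k),
    ← Lagrange.nodal_erase_eq_nodal_div (mem_univ k),
    Lagrange.nodalWeight_eq_eval_nodal_erase_inv, eval_derivative_derivative_omegaPoly,
    eval_derivative_omegaPoly, derivative_C_mul, eval_mul, eval_C]
  ring

/-- Hermite–Fejér interpolation reproduces constants. -/
theorem sum_fejerV_mul_lagBasis_sq {n : ℕ} (hn : 0 < n) {x : Fin n → ℝ}
    (hx : Function.Injective x) (t : ℝ) : ∑ k, fejerV x k t * lagBasis x k t ^ 2 = 1 := by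
  set a : Fin n → ℝ := fun k =>
    (omegaPoly x).derivative.derivative.eval (x k) / (omegaPoly x).derivative.eval (x k) with ha
  set H : ℝ[X] := ∑ k, (1 - (X - C (x k)) * C (a k)) * Lagrange.basis univ x k ^ 2 - 1 with hH
  have hself : ∀ k, (Lagrange.basis univ x k).eval (x k) = 1 := fun k =>
    Lagrange.eval_basis_self hx.injOn (mem_univ k)
  have hother : ∀ k j, k ≠ j → (Lagrange.basis univ x k).eval (x j) = 0 := fun k j h =>
    Lagrange.eval_basis_of_ne h (mem_univ j)
  have hzero : H = 0 := by
    refine eq_zero_of_double_roots hx ?_ (fun j => ?_) fun j => ?_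
    · have h1 : H.natDegree ≤ 2 * n - 1 := by
        refine (natDegree_sub_le_of_le (natDegree_sum_le_of_forall_le _ _ (n := 2 * n - 1)
          fun k _ => ?_) (n := 0) (by simp)).trans (by simp)
        have hb : (Lagrange.basis univ x k).natDegree = n - 1 := by
          simpa using Lagrange.natDegree_basis hx.injOn (mem_univ k)
        have h2 : (1 - (X - C (x k)) * C (a k)).natDegree ≤ 1 := by compute_degree
        have h3 : (Lagrange.basis univ x k ^ 2).natDegree ≤ 2 * (n - 1) := by
          rw [natDegree_pow, hb]
        exact (natDegree_mul_le_of_le h2 h3).trans (by omega)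
      omega
    · rw [hH, eval_sub, eval_finsetSum, sum_eq_single j]
      · simp [hself]
      · intro k _ hk
        simp [hother k j hk]
      · simp
    · rw [hH, derivative_sub, derivative_sum, eval_sub, eval_finsetSum, sum_eq_single j]
      · have h2 := eval_derivative_basis_self x j
        rw [derivative_mul, derivative_pow]
        simp only [derivative_mul, derivative_sub, derivative_one, derivative_X, derivative_C,
          eval_add, eval_mul, eval_sub, eval_pow, eval_X, eval_C, eval_one, eval_zero, hself]
        simp only [ha, ← h2]
        simp
      · intro k _ hk
        rw [derivative_mul, derivative_pow]
        simp [hother k j hk]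
      · simp
  have h := congrArg (eval t) hzero
  rw [hH, eval_sub, eval_finsetSum, eval_one, eval_zero, sub_eq_zero] at h
  rw [← h]
  refine sum_congr rfl fun k _ => ?_
  simp [fejerV, ha, eval_lagrange_basis_eq_lagBasis]

/-- At strongly normal nodes the Lagrange basis polynomials are uniformly bounded. -/
theorem abs_lagBasis_le_of_stronglyNormal {n : ℕ} {x : Fin n → ℝ} (hx : Function.Injective x)
    {c t : ℝ} (hc : 0 < c) (hsn : ∀ k, c ≤ fejerV x k t) (k : Fin n) :
    |lagBasis x k t| ≤ 1 / √c := by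
  have h1 := sum_fejerV_mul_lagBasis_sq (Fin.pos k) hx t
  have h2 : c * lagBasis x k t ^ 2 ≤ 1 := by
    rw [← h1]
    exact (mul_le_mul_of_nonneg_right (hsn k) (sq_nonneg _)).trans
      (single_le_sum (f := fun k => fejerV x k t * lagBasis x k t ^ 2)
        (fun i _ => mul_nonneg (hc.le.trans (hsn i)) (sq_nonneg _)) (mem_univ k))
  have hs := Real.sqrt_pos.mpr hc
  rw [le_div_iff₀ hs]
  refine abs_le_of_sq_le_sq' ?_ zero_le_one |>.2
  rw [mul_pow, sq_abs, Real.sq_sqrt hc.le]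
  linarith

theorem sin_half_sq_eq (x : ℝ) : Real.sin (x / 2) ^ 2 = (1 - Real.cos x) / 2 := by
  have h := Real.cos_two_mul (x / 2)
  rw [mul_div_cancel₀ x two_ne_zero] at h
  have h2 := Real.sin_sq_add_cos_sq (x / 2)
  linarith

theorem integral_cos_int_mul (j : ℤ) :
    ∫ φ in (0 : ℝ)..Real.pi, Real.cos (j * φ) = if j = 0 then Real.pi else 0 := by
  split_ifs with h
  · simp [h]
  · have hj : (j : ℝ) ≠ 0 := by exact_mod_cast h
    rw [intervalIntegral.integral_comp_mul_left (fun φ => Real.cos φ) hj]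
    simp [Real.sin_int_mul_pi]

theorem integral_cos_int_reflect (j : ℤ) (θ : ℝ) :
    ∫ φ in (0 : ℝ)..Real.pi, (Real.cos (j * (θ - φ)) + Real.cos (j * (θ + φ)))
      = if j = 0 then 2 * Real.pi else 0 := by
  have h : ∀ φ, Real.cos (j * (θ - φ)) + Real.cos (j * (θ + φ))
      = 2 * Real.cos (j * θ) * Real.cos (j * φ) := by
    intro φ
    rw [mul_sub, mul_add, Real.cos_sub, Real.cos_add]
    ring
  simp only [h]
  rw [intervalIntegral.integral_const_mul, integral_cos_int_mul]
  split_ifs with hj <;> simp [hj]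

/-- The Fejér–Korovkin kernel of degree less than `N`, up to normalization. -/
noncomputable def korovkinKernel (N : ℕ) (x : ℝ) : ℝ :=
  (∑ k ∈ range N, Real.sin ((k + 1) * (Real.pi / (N + 1))) * Real.cos (k * x)) ^ 2 +
    (∑ k ∈ range N, Real.sin ((k + 1) * (Real.pi / (N + 1))) * Real.sin (k * x)) ^ 2

/-- The mean value of the Fejér–Korovkin kernel. -/
noncomputable def korovkinMass (N : ℕ) : ℝ :=
  ∑ k ∈ range N, Real.sin ((k + 1) * (Real.pi / (N + 1))) ^ 2

theorem korovkinKernel_nonneg (N : ℕ) (x : ℝ) : 0 ≤ korovkinKernel N x := by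
  unfold korovkinKernel
  positivity

theorem continuous_korovkinKernel (N : ℕ) : Continuous (korovkinKernel N) := by
  unfold korovkinKernel
  fun_prop

theorem korovkinMass_pos {N : ℕ} (hN : 0 < N) : 0 < korovkinMass N := by
  refine sum_pos (fun k hk => ?_) ⟨0, mem_range.mpr hN⟩
  have hk' : (k : ℝ) + 1 < N + 1 := by
    have : (k : ℝ) < N := by exact_mod_cast mem_range.mp hk
    linarith
  have hpos : (0 : ℝ) < N + 1 := by positivity
  refine pow_pos (Real.sin_pos_of_pos_of_lt_pi (by positivity) ?_) 2
  rw [← mul_div_assoc, div_lt_iff₀ hpos]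
  nlinarith [Real.pi_pos]

theorem korovkinKernel_eq_sum (N : ℕ) (x : ℝ) :
    korovkinKernel N x = ∑ k ∈ range N, ∑ l ∈ range N,
      Real.sin ((k + 1) * (Real.pi / (N + 1))) * Real.sin ((l + 1) * (Real.pi / (N + 1))) *
        Real.cos (((k : ℤ) - (l : ℤ) : ℤ) * x) := by
  rw [korovkinKernel, sq, sq, sum_mul_sum, sum_mul_sum, ← sum_add_distrib]
  refine sum_congr rfl fun k _ => ?_
  rw [← sum_add_distrib]
  refine sum_congr rfl fun l _ => ?_
  push_cast
  rw [sub_mul, Real.cos_sub]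
  ring

theorem integral_korovkinKernel (N : ℕ) (θ : ℝ) :
    ∫ φ in (0 : ℝ)..Real.pi, (korovkinKernel N (θ - φ) + korovkinKernel N (θ + φ))
      = 2 * Real.pi * korovkinMass N := by
  have h : ∀ φ, korovkinKernel N (θ - φ) + korovkinKernel N (θ + φ)
      = ∑ k ∈ range N, ∑ l ∈ range N, Real.sin ((k + 1) * (Real.pi / (N + 1))) *
        Real.sin ((l + 1) * (Real.pi / (N + 1))) *
        (Real.cos (((k : ℤ) - (l : ℤ) : ℤ) * (θ - φ))
          + Real.cos (((k : ℤ) - (l : ℤ) : ℤ) * (θ + φ))) := by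
    intro φ
    simp only [korovkinKernel_eq_sum, ← sum_add_distrib, mul_add]
  simp only [h]
  rw [intervalIntegral.integral_finsetSum fun k _ => Continuous.intervalIntegrable (by fun_prop) _ _,
    korovkinMass, mul_sum]
  refine sum_congr rfl fun k hk => ?_
  rw [intervalIntegral.integral_finsetSum fun k _ => Continuous.intervalIntegrable (by fun_prop) _ _,
    sum_eq_single k]
  · rw [intervalIntegral.integral_const_mul, integral_cos_int_reflect]
    simp
    ring
  · intro l _ hl
    rw [intervalIntegral.integral_const_mul, integral_cos_int_reflect,
      if_neg (by simpa [sub_eq_zero] using fun h : k = l => hl h.symm), mul_zero]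
  · exact fun h => absurd hk h

theorem integral_cos_mul_korovkinKernel (N : ℕ) (θ : ℝ) :
    ∫ φ in (0 : ℝ)..Real.pi, (Real.cos (θ - φ) * korovkinKernel N (θ - φ)
        + Real.cos (θ + φ) * korovkinKernel N (θ + φ))
      = 2 * Real.pi * korovkinMass N * Real.cos (Real.pi / (N + 1)) := by
  set γ := Real.pi / (N + 1) with hγ
  have hprod : ∀ (j : ℤ) (x : ℝ), Real.cos x * Real.cos (j * x)
      = (Real.cos ((j + 1 : ℤ) * x) + Real.cos ((j - 1 : ℤ) * x)) / 2 := by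
    intro j x
    push_cast
    rw [add_mul, sub_mul, Real.cos_add, Real.cos_sub, one_mul]
    ring
  have h : ∀ φ, Real.cos (θ - φ) * korovkinKernel N (θ - φ)
        + Real.cos (θ + φ) * korovkinKernel N (θ + φ)
      = ∑ k ∈ range N, ∑ l ∈ range N, Real.sin ((k + 1) * γ) * Real.sin ((l + 1) * γ) / 2 *
        ((Real.cos (((k : ℤ) - (l : ℤ) + 1 : ℤ) * (θ - φ))
          + Real.cos (((k : ℤ) - (l : ℤ) + 1 : ℤ) * (θ + φ)))
        + (Real.cos (((k : ℤ) - (l : ℤ) - 1 : ℤ) * (θ - φ))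
          + Real.cos (((k : ℤ) - (l : ℤ) - 1 : ℤ) * (θ + φ)))) := by
    intro φ
    simp only [korovkinKernel_eq_sum, mul_sum, ← sum_add_distrib]
    refine sum_congr rfl fun k _ => sum_congr rfl fun l _ => ?_
    have h1 := hprod ((k : ℤ) - (l : ℤ)) (θ - φ)
    have h2 := hprod ((k : ℤ) - (l : ℤ)) (θ + φ)
    rw [mul_left_comm, h1, mul_left_comm, h2]
    ring
  simp only [h]
  rw [intervalIntegral.integral_finsetSum fun k _ => Continuous.intervalIntegrable (by fun_prop) _ _,
    korovkinMass, mul_assoc, sum_mul, mul_sum]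
  refine sum_congr rfl fun k hk => ?_
  rw [intervalIntegral.integral_finsetSum fun k _ => Continuous.intervalIntegrable (by fun_prop) _ _]
  have hterm : ∀ l : ℕ, ∫ φ in (0 : ℝ)..Real.pi,
      Real.sin ((k + 1) * γ) * Real.sin ((l + 1) * γ) / 2 *
        ((Real.cos (((k : ℤ) - (l : ℤ) + 1 : ℤ) * (θ - φ))
          + Real.cos (((k : ℤ) - (l : ℤ) + 1 : ℤ) * (θ + φ)))
        + (Real.cos (((k : ℤ) - (l : ℤ) - 1 : ℤ) * (θ - φ))
          + Real.cos (((k : ℤ) - (l : ℤ) - 1 : ℤ) * (θ + φ))))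
      = Real.pi * Real.sin ((k + 1) * γ) * ((if l = k + 1 then Real.sin ((l + 1) * γ) else 0)
        + (if l + 1 = k then Real.sin ((l + 1) * γ) else 0)) := by
    intro l
    rw [intervalIntegral.integral_const_mul, intervalIntegral.integral_add
      (Continuous.intervalIntegrable (by fun_prop) _ _)
      (Continuous.intervalIntegrable (by fun_prop) _ _),
      integral_cos_int_reflect, integral_cos_int_reflect]
    have e1 : (k : ℤ) - l + 1 = 0 ↔ l = k + 1 := by omega
    have e2 : (k : ℤ) - l - 1 = 0 ↔ l + 1 = k := by omega
    simp only [e1, e2]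
    split_ifs <;> ring
  simp only [hterm]
  rw [← mul_sum, sum_add_distrib]
  have s1 : ∑ l ∈ range N, (if l = k + 1 then Real.sin ((l + 1 : ℝ) * γ) else 0)
      = Real.sin ((k + 2) * γ) := by
    rw [sum_ite_eq']
    split_ifs with hk1
    · push_cast
      ring_nf
    · have hkN : k + 1 = N := by
        have := mem_range.mp hk
        simp only [mem_range] at hk1
        omega
      have : ((k : ℝ) + 2) * γ = Real.pi := by
        have h3 : (k : ℝ) + 2 = N + 1 := by
          rw [← hkN]
          push_cast
          ring
        rw [h3, hγ]
        field_simp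
      rw [this, Real.sin_pi]
  have s2 : ∑ l ∈ range N, (if l + 1 = k then Real.sin ((l + 1 : ℝ) * γ) else 0)
      = Real.sin (k * γ) := by
    rcases k with _ | k
    · simp
    · have hk' : k ∈ range N := mem_range.mpr (by have := mem_range.mp hk; omega)
      simp only [Nat.add_right_cancel_iff]
      rw [sum_ite_eq', if_pos hk']
      push_cast
      rfl
  rw [s1, s2]
  have e1 : ((k : ℝ) + 2) * γ = (k + 1) * γ + γ := by ring
  have e2 : (k : ℝ) * γ = (k + 1) * γ - γ := by ring
  rw [e1, e2, Real.sin_add, Real.sin_sub]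
  ring

theorem integral_comp_cos_mul_sin_int {F : ℝ → ℝ} (hF : Continuous F) {N : ℕ}
    (horth : ∀ q : ℝ[X], q.natDegree + 2 ≤ N → ∫ y in (-1 : ℝ)..1, F y * q.eval y = 0)
    (j : ℤ) (hj : j.natAbs < N) :
    ∫ φ in (0 : ℝ)..Real.pi, F (Real.cos φ) * Real.sin (j * φ) = 0 := by
  by_cases hj0 : j = 0
  · simp [hj0]
  set q := Chebyshev.U ℝ (j - 1) with hq
  have hdeg : q.natDegree + 2 ≤ N := by
    rw [hq, Chebyshev.natDegree_U]
    have : j - 1 + 1 = j := by ring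
    rw [this]
    omega
  have hs : ∀ φ, F (Real.cos φ) * Real.sin (j * φ)
      = -(((fun y => F y * q.eval y) ∘ Real.cos) φ * -Real.sin φ) := by
    intro φ
    have h := Chebyshev.U_real_cos φ (j - 1)
    push_cast at h
    rw [sub_add_cancel] at h
    simp only [Function.comp, ← h, hq]
    ring
  simp only [hs]
  rw [intervalIntegral.integral_neg, intervalIntegral.integral_comp_mul_deriv
    (fun φ _ => Real.hasDerivAt_cos φ) (by fun_prop) (by fun_prop), Real.cos_zero, Real.cos_pi,
    intervalIntegral.integral_symm, horth q hdeg]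
  simp

theorem integral_comp_cos_mul_korovkinKernel_sub {F : ℝ → ℝ} (hF : Continuous F) {N : ℕ}
    (horth : ∀ q : ℝ[X], q.natDegree + 2 ≤ N → ∫ y in (-1 : ℝ)..1, F y * q.eval y = 0) (θ : ℝ) :
    ∫ φ in (0 : ℝ)..Real.pi,
      F (Real.cos φ) * (korovkinKernel N (θ - φ) - korovkinKernel N (θ + φ)) = 0 := by
  have h : ∀ φ, F (Real.cos φ) * (korovkinKernel N (θ - φ) - korovkinKernel N (θ + φ))
      = ∑ k ∈ range N, ∑ l ∈ range N, 2 * Real.sin ((k + 1) * (Real.pi / (N + 1))) *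
        Real.sin ((l + 1) * (Real.pi / (N + 1))) * Real.sin (((k : ℤ) - (l : ℤ) : ℤ) * θ) *
        (F (Real.cos φ) * Real.sin (((k : ℤ) - (l : ℤ) : ℤ) * φ)) := by
    intro φ
    simp only [korovkinKernel_eq_sum, ← sum_sub_distrib, mul_sum]
    refine sum_congr rfl fun k _ => sum_congr rfl fun l _ => ?_
    rw [mul_sub (((k : ℤ) - (l : ℤ) : ℤ) : ℝ), mul_add (((k : ℤ) - (l : ℤ) : ℤ) : ℝ),
      Real.cos_sub, Real.cos_add]
    ring
  simp only [h]
  rw [intervalIntegral.integral_finsetSum fun k _ => Continuous.intervalIntegrable (by fun_prop) _ _]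
  refine sum_eq_zero fun k hk => ?_
  rw [intervalIntegral.integral_finsetSum fun k _ => Continuous.intervalIntegrable (by fun_prop) _ _]
  refine sum_eq_zero fun l hl => ?_
  have hk' := mem_range.mp hk
  have hl' := mem_range.mp hl
  rw [intervalIntegral.integral_const_mul,
    integral_comp_cos_mul_sin_int hF horth _ (by omega), mul_zero]

theorem one_sub_cos_add_one_sub_cos_le {θ φ : ℝ} (hθ : 0 ≤ θ) (hφ : 0 ≤ φ)
    (h : θ + φ ≤ Real.pi) :
    (1 - Real.cos θ) + (1 - Real.cos φ) ≤ 2 * Real.sin ((θ + φ) / 2) := by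
  have key : ∀ a b : ℝ, 0 ≤ a → 0 ≤ b → a + b ≤ Real.pi / 2 →
      Real.sin a ^ 2 ≤ Real.sin a * Real.cos b := by
    intro a b ha hb hab
    have h1 : Real.sin a ≤ Real.cos b := by
      rw [← Real.cos_pi_div_two_sub]
      exact Real.cos_le_cos_of_nonneg_of_le_pi hb (by linarith [Real.pi_pos]) (by linarith)
    have h2 : 0 ≤ Real.sin a := Real.sin_nonneg_of_nonneg_of_le_pi ha (by linarith [Real.pi_pos])
    nlinarith
  have h1 := key (θ / 2) (φ / 2) (by linarith) (by linarith) (by linarith)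
  have h2 := key (φ / 2) (θ / 2) (by linarith) (by linarith) (by linarith)
  rw [sin_half_sq_eq] at h1 h2
  rw [add_div, Real.sin_add]
  linarith

/-- A Lipschitz function vanishing at the endpoints, composed with the cosine and extended oddly,
oscillates at most by a multiple of the chord. -/
theorem abs_comp_cos_add_comp_cos_le {F : ℝ → ℝ} {M : ℝ} (hM : 0 ≤ M)
    (h1 : F 1 = 0) (hm1 : F (-1) = 0)
    (hlip : ∀ a ∈ Set.Icc (-1 : ℝ) 1, ∀ b ∈ Set.Icc (-1 : ℝ) 1, |F a - F b| ≤ M * |a - b|)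
    {θ φ : ℝ} (hθ : θ ∈ Set.Icc 0 Real.pi) (hφ : φ ∈ Set.Icc 0 Real.pi) :
    |F (Real.cos θ) + F (Real.cos φ)| ≤ M * (2 * |Real.sin ((θ + φ) / 2)|) := by
  have hsin : |Real.sin ((θ + φ) / 2)| = Real.sin ((θ + φ) / 2) :=
    abs_of_nonneg (Real.sin_nonneg_of_nonneg_of_le_pi (by linarith [hθ.1, hφ.1])
      (by linarith [hθ.2, hφ.2]))
  have hc : ∀ x, Real.cos x ∈ Set.Icc (-1 : ℝ) 1 := fun x =>
    ⟨Real.neg_one_le_cos x, Real.cos_le_one x⟩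
  have hr : ∀ x, |F (Real.cos x)| ≤ M * (1 - Real.cos x) := by
    intro x
    have h := hlip _ (hc x) 1 (by norm_num)
    rwa [h1, sub_zero, abs_sub_comm, abs_of_nonneg (sub_nonneg.mpr (Real.cos_le_one x))] at h
  have hl : ∀ x, |F (Real.cos x)| ≤ M * (1 - Real.cos (Real.pi - x)) := by
    intro x
    have h := hlip _ (hc x) (-1) (by norm_num)
    rw [hm1, sub_zero, sub_neg_eq_add, abs_of_nonneg (a := Real.cos x + 1)
      (by linarith [Real.neg_one_le_cos x])] at h
    rw [Real.cos_pi_sub, sub_neg_eq_add]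
    linarith
  rw [hsin]
  refine (abs_add_le _ _).trans ?_
  rcases le_total (θ + φ) Real.pi with h | h
  · have h2 := one_sub_cos_add_one_sub_cos_le hθ.1 hφ.1 h
    have h3 := mul_le_mul_of_nonneg_left h2 hM
    linarith [hr θ, hr φ]
  · have h2 := one_sub_cos_add_one_sub_cos_le (θ := Real.pi - θ) (φ := Real.pi - φ)
      (by linarith [hθ.2]) (by linarith [hφ.2]) (by linarith)
    have h4 : (Real.pi - θ + (Real.pi - φ)) / 2 = Real.pi - (θ + φ) / 2 := by ring
    rw [h4, Real.sin_pi_sub] at h2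
    have h3 := mul_le_mul_of_nonneg_left h2 hM
    linarith [hl θ, hl φ]

theorem abs_comp_cos_sub_comp_cos_le {F : ℝ → ℝ} {M : ℝ} (hM : 0 ≤ M)
    (hlip : ∀ a ∈ Set.Icc (-1 : ℝ) 1, ∀ b ∈ Set.Icc (-1 : ℝ) 1, |F a - F b| ≤ M * |a - b|)
    (θ φ : ℝ) :
    |F (Real.cos θ) - F (Real.cos φ)| ≤ M * (2 * |Real.sin ((θ - φ) / 2)|) := by
  refine (hlip _ ⟨Real.neg_one_le_cos θ, Real.cos_le_one θ⟩ _
    ⟨Real.neg_one_le_cos φ, Real.cos_le_one φ⟩).trans (mul_le_mul_of_nonneg_left ?_ hM)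
  rw [Real.cos_sub_cos, abs_mul, abs_mul, abs_neg, abs_two]
  nlinarith [Real.abs_sin_le_one ((θ + φ) / 2), abs_nonneg (Real.sin ((θ - φ) / 2))]

/-- A Bohr–Favard type inequality on `[-1, 1]`: a Lipschitz function which vanishes at the
endpoints and is orthogonal to low-degree polynomials is small. -/
theorem abs_le_of_orthogonal_of_lipschitz {F : ℝ → ℝ} (hF : Continuous F) {N : ℕ} (hN : 0 < N)
    {M : ℝ} (hM : 0 ≤ M) (h1 : F 1 = 0) (hm1 : F (-1) = 0)
    (hlip : ∀ a ∈ Set.Icc (-1 : ℝ) 1, ∀ b ∈ Set.Icc (-1 : ℝ) 1, |F a - F b| ≤ M * |a - b|)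
    (horth : ∀ q : ℝ[X], q.natDegree + 2 ≤ N → ∫ y in (-1 : ℝ)..1, F y * q.eval y = 0)
    {u : ℝ} (hu : u ∈ Set.Icc (-1 : ℝ) 1) : |F u| ≤ M * (Real.pi / N) := by
  have hpi := Real.pi_pos
  have hN' : (0 : ℝ) < N := by exact_mod_cast hN
  set D := korovkinKernel N with hD
  have hDc : Continuous D := continuous_korovkinKernel N
  have hD0 : ∀ x, 0 ≤ D x := korovkinKernel_nonneg N
  set A := korovkinMass N with hA
  have hA0 : 0 < A := korovkinMass_pos hN
  set γ := Real.pi / (N + 1) with hγ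
  have hγ0 : 0 < γ := by positivity
  have hγpi : γ ≤ Real.pi := div_le_self hpi.le (by linarith)
  set ε := Real.sin (γ / 2) with hε
  have hε0 : 0 < ε := Real.sin_pos_of_pos_of_lt_pi (by linarith) (by linarith)
  set θ := Real.arccos u with hθdef
  have hθ : θ ∈ Set.Icc 0 Real.pi := ⟨Real.arccos_nonneg u, Real.arccos_le_pi u⟩
  have hcosθ : Real.cos θ = u := Real.cos_arccos hu.1 hu.2
  let B : ℝ → ℝ := fun x => (ε + (1 - Real.cos x) / 2 / ε) * D x
  have hBbound : ∀ x y, |y| ≤ M * (2 * |Real.sin (x / 2)|) → |y * D x| ≤ M * B x := by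
    intro x y hy
    rw [abs_mul, abs_of_nonneg (hD0 x)]
    have h2 : 2 * |Real.sin (x / 2)| ≤ ε + (1 - Real.cos x) / 2 / ε := by
      rw [← sin_half_sq_eq, ← sq_abs]
      have h3 : ε + |Real.sin (x / 2)| ^ 2 / ε - 2 * |Real.sin (x / 2)|
          = (ε - |Real.sin (x / 2)|) ^ 2 / ε := by
        field_simp
        ring
      have h4 : 0 ≤ (ε - |Real.sin (x / 2)|) ^ 2 / ε := by positivity
      linarith
    calc |y| * D x ≤ M * (ε + (1 - Real.cos x) / 2 / ε) * D x :=
          mul_le_mul_of_nonneg_right (hy.trans (mul_le_mul_of_nonneg_left h2 hM)) (hD0 x)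
      _ = M * B x := by simp only [B]; ring
  have hBint : ∫ φ in (0 : ℝ)..Real.pi, (B (θ - φ) + B (θ + φ)) = 2 * Real.pi * A * (2 * ε) := by
    have e1 : ∀ φ, B (θ - φ) + B (θ + φ) = (ε + 1 / (2 * ε)) * (D (θ - φ) + D (θ + φ))
        - 1 / (2 * ε) * (Real.cos (θ - φ) * D (θ - φ) + Real.cos (θ + φ) * D (θ + φ)) := by
      intro φ
      simp only [B]
      field_simp
      ring
    simp only [e1]
    rw [intervalIntegral.integral_sub (Continuous.intervalIntegrable (by fun_prop) _ _)
      (Continuous.intervalIntegrable (by fun_prop) _ _), intervalIntegral.integral_const_mul,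
      intervalIntegral.integral_const_mul, integral_korovkinKernel,
      integral_cos_mul_korovkinKernel]
    have h2 : Real.cos (Real.pi / (N + 1)) = 1 - 2 * ε ^ 2 := by
      rw [hε, sin_half_sq_eq]
      ring
    rw [h2]
    field_simp
    ring
  have hrepr : F u * (2 * Real.pi * A) = ∫ φ in (0 : ℝ)..Real.pi,
      ((F u - F (Real.cos φ)) * D (θ - φ) + (F u + F (Real.cos φ)) * D (θ + φ)) := by
    have e1 : ∀ φ, (F u - F (Real.cos φ)) * D (θ - φ) + (F u + F (Real.cos φ)) * D (θ + φ)
        = F u * (D (θ - φ) + D (θ + φ)) - F (Real.cos φ) * (D (θ - φ) - D (θ + φ)) := by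
      intro φ
      ring
    simp only [e1]
    rw [intervalIntegral.integral_sub (Continuous.intervalIntegrable (by fun_prop) _ _)
      (Continuous.intervalIntegrable (by fun_prop) _ _), intervalIntegral.integral_const_mul,
      integral_korovkinKernel, integral_comp_cos_mul_korovkinKernel_sub hF horth, sub_zero]
  have hbound : |F u * (2 * Real.pi * A)| ≤ M * (2 * Real.pi * A * (2 * ε)) := by
    rw [hrepr, ← hBint, ← intervalIntegral.integral_const_mul, ← Real.norm_eq_abs]
    refine intervalIntegral.norm_integral_le_of_norm_le hpi.le (.of_forall fun φ hφ => ?_)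
      (Continuous.intervalIntegrable (by fun_prop) _ _)
    have hφ' : φ ∈ Set.Icc 0 Real.pi := Set.Ioc_subset_Icc_self hφ
    rw [Real.norm_eq_abs, mul_add]
    refine (abs_add_le _ _).trans (add_le_add (hBbound _ _ ?_) (hBbound _ _ ?_))
    · rw [← hcosθ]
      exact abs_comp_cos_sub_comp_cos_le hM hlip θ φ
    · rw [← hcosθ]
      exact abs_comp_cos_add_comp_cos_le hM h1 hm1 hlip hθ hφ'
  have hA2 : 0 < 2 * Real.pi * A := by positivity
  rw [abs_mul, abs_of_pos hA2] at hbound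
  have h2 : |F u| ≤ M * (2 * ε) := by
    refine le_of_mul_le_mul_right ?_ hA2
    linarith
  have h3 : 2 * ε ≤ Real.pi / N := by
    have h4 : ε ≤ γ / 2 := Real.sin_le (by linarith)
    have h5 : γ ≤ Real.pi / N := div_le_div_of_nonneg_left hpi.le hN' (by linarith)
    linarith
  exact h2.trans (mul_le_mul_of_nonneg_left h3 hM)

theorem exists_derivative_eq (q : ℝ[X]) :
    ∃ Q : ℝ[X], derivative Q = q ∧ Q.natDegree ≤ q.natDegree + 1 := by
  refine ⟨∑ i ∈ range (q.natDegree + 1), monomial (i + 1) (q.coeff i / (i + 1)), ?_, ?_⟩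
  · conv_rhs => rw [q.as_sum_range]
    rw [derivative_sum]
    refine sum_congr rfl fun i _ => ?_
    rw [derivative_monomial]
    have : ((i : ℝ) + 1) ≠ 0 := by positivity
    push_cast
    rw [div_mul_cancel₀ _ this]
  · refine natDegree_sum_le_of_forall_le _ _ fun i hi => ?_
    have := mem_range.mp hi
    exact (natDegree_monomial_le _).trans (by omega)

theorem eval_eq_add_integral_derivative (Q : ℝ[X]) (a y : ℝ) :
    Q.eval y = Q.eval a + ∫ z in a..y, (derivative Q).eval z := by
  rw [intervalIntegral.integral_eq_sub_of_hasDerivAt (fun z _ => Q.hasDerivAt z)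
    ((derivative Q).continuous.intervalIntegrable _ _)]
  ring

theorem continuous_tail_integral {K : ℝ → ℝ} (hK : ∀ a b, IntervalIntegrable K volume a b)
    (b : ℝ) : Continuous fun z => ∫ y in z..b, K y := by
  simp_rw [intervalIntegral.integral_symm b]
  exact (intervalIntegral.continuous_primitive hK b).neg

/-- The iterated Peano kernels of the interpolation error at `t`. -/
noncomputable def peanoKernel {n : ℕ} (x : Fin n → ℝ) (t : ℝ) : ℕ → ℝ → ℝ
  | 0 => fun y => (if y < t then 1 else 0) - ∑ k, lagBasis x k t * (if y < x k then 1 else 0)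
  | s + 1 => fun z => ∫ y in z..1, peanoKernel x t s y

section PeanoKernel

variable {n : ℕ} {x : Fin n → ℝ} {t : ℝ}

theorem intervalIntegrable_step (z a b : ℝ) :
    IntervalIntegrable (fun y => if y < z then (1 : ℝ) else 0) volume a b := by
  refine Antitone.intervalIntegrable fun y y' h => ?_
  split_ifs <;> linarith

theorem intervalIntegrable_peanoKernel (x : Fin n → ℝ) (t : ℝ) (s : ℕ) (a b : ℝ) :
    IntervalIntegrable (peanoKernel x t s) volume a b := by
  induction s generalizing a b with
  | zero =>
    refine (intervalIntegrable_step t a b).sub ?_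
    have h := IntervalIntegrable.sum (μ := volume) (a := a) (b := b) univ
      (f := fun k y => lagBasis x k t * (if y < x k then 1 else 0))
      fun k _ => (intervalIntegrable_step (x k) a b).const_mul _
    rwa [Finset.sum_fn] at h
  | succ s ih =>
    exact (continuous_tail_integral ih 1).intervalIntegrable a b

theorem continuous_peanoKernel_succ (x : Fin n → ℝ) (t : ℝ) (s : ℕ) :
    Continuous (peanoKernel x t (s + 1)) :=
  continuous_tail_integral (intervalIntegrable_peanoKernel x t s) 1

theorem step_mul_eq_indicator (h : ℝ → ℝ) (z : ℝ) :
    (fun y => (if y < z then 1 else 0) * h y) = (Set.Iio z).indicator h := by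
  ext y
  simp [Set.indicator]

theorem intervalIntegrable_step_mul {h : ℝ → ℝ} {a b : ℝ} (hh : IntervalIntegrable h volume a b)
    (z : ℝ) : IntervalIntegrable (fun y => (if y < z then 1 else 0) * h y) volume a b := by
  rw [step_mul_eq_indicator]
  exact ⟨hh.1.indicator measurableSet_Iio, hh.2.indicator measurableSet_Iio⟩

theorem integral_step_mul (h : ℝ → ℝ) {a b z : ℝ} (hz : z ∈ Set.Icc a b) :
    ∫ y in a..b, (if y < z then 1 else 0) * h y = ∫ y in a..z, h y := by
  rw [← intervalIntegral.integral_indicator hz]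
  refine intervalIntegral.integral_congr_ae ?_
  have h1 : ∀ᵐ y : ℝ, y ≠ z := by simp [ae_iff]
  filter_upwards [h1] with y hy _
  rcases lt_or_gt_of_ne hy with h2 | h2
  · simp [h2, h2.le]
  · simp [h2.not_gt, h2.not_ge]

theorem sum_lagBasis (hn : 0 < n) (hx : Function.Injective x) (t : ℝ) :
    ∑ k, lagBasis x k t = 1 := by
  have h := lagInterp_eval_polynomial hx (p := 1) (by simpa using hn) t
  simpa [lagInterp] using h

theorem intervalIntegrable_peanoKernel_mul {h : ℝ → ℝ} {a b : ℝ}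
    (hh : IntervalIntegrable h volume a b) (x : Fin n → ℝ) (t : ℝ) (s : ℕ) :
    IntervalIntegrable (fun y => peanoKernel x t s y * h y) volume a b := by
  cases s with
  | zero =>
    have h1 := IntervalIntegrable.sum (μ := volume) (a := a) (b := b) univ
      (f := fun k y => lagBasis x k t * ((if y < x k then 1 else 0) * h y))
      fun k _ => (intervalIntegrable_step_mul hh (x k)).const_mul _
    convert (intervalIntegrable_step_mul hh t).sub h1 using 1
    ext y
    simp [peanoKernel, sub_mul, sum_mul]
  | succ s => exact hh.continuousOn_mul (continuous_peanoKernel_succ x t s).continuousOn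

theorem sub_lagInterp_eq_integral_peanoKernel (hn : 0 < n) (hx : Function.Injective x)
    (hmem : ∀ i, x i ∈ Set.Icc (-1 : ℝ) 1) (ht : t ∈ Set.Icc (-1 : ℝ) 1) {H h : ℝ → ℝ}
    (hh : IntervalIntegrable h volume (-1) 1)
    (hH : ∀ y ∈ Set.Icc (-1 : ℝ) 1, H y = H (-1) + ∫ z in (-1 : ℝ)..y, h z) :
    H t - lagInterp x H t = ∫ y in (-1 : ℝ)..1, peanoKernel x t 0 y * h y := by
  have h1 : ∀ y, peanoKernel x t 0 y * h y = (if y < t then 1 else 0) * h y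
      - ∑ k, lagBasis x k t * ((if y < x k then 1 else 0) * h y) := by
    intro y
    simp [peanoKernel, sub_mul, sum_mul]
  have h2 : ∀ z ∈ Set.Icc (-1 : ℝ) 1,
      ∫ y in (-1 : ℝ)..1, (if y < z then 1 else 0) * h y = H z - H (-1) := by
    intro z hz
    rw [integral_step_mul h hz, hH z hz]
    ring
  have h3 : ∀ k ∈ univ, IntervalIntegrable
      (fun y => lagBasis x k t * ((if y < x k then 1 else 0) * h y)) volume (-1) 1 :=
    fun k _ => (intervalIntegrable_step_mul hh (x k)).const_mul _
  have h4 := IntervalIntegrable.sum univ h3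
  rw [Finset.sum_fn] at h4
  simp_rw [h1]
  rw [intervalIntegral.integral_sub (intervalIntegrable_step_mul hh t) h4,
    intervalIntegral.integral_finsetSum h3, h2 t ht]
  simp_rw [intervalIntegral.integral_const_mul, h2 _ (hmem _), mul_sub, sum_sub_distrib,
    ← sum_mul, sum_lagBasis hn hx]
  simp only [lagInterp, mul_comm]
  ring

theorem integral_peanoKernel_mul_eval (hx : Function.Injective x)
    (hmem : ∀ i, x i ∈ Set.Icc (-1 : ℝ) 1) (ht : t ∈ Set.Icc (-1 : ℝ) 1) (s : ℕ) :
    ∀ q : ℝ[X], q.natDegree + s + 1 < n →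
      ∫ y in (-1 : ℝ)..1, peanoKernel x t s y * q.eval y = 0 := by
  induction s with
  | zero =>
    intro q hq
    obtain ⟨Q, hQ, hd⟩ := exists_derivative_eq q
    rw [← sub_lagInterp_eq_integral_peanoKernel (by omega) hx hmem ht
      (H := fun y => Q.eval y) (q.continuous.intervalIntegrable _ _)
      fun y _ => by simpa only [hQ] using eval_eq_add_integral_derivative Q (-1) y,
      lagInterp_eval_polynomial hx, sub_self]
    exact degree_le_natDegree.trans_lt (by exact_mod_cast (show Q.natDegree < n by omega))
  | succ s ih =>
    intro q hq
    obtain ⟨Q, hQ, hd⟩ := exists_derivative_eq q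
    have h0 : ∫ y in (-1 : ℝ)..1, peanoKernel x t s y = 0 := by
      simpa using ih 1 (by simp; omega)
    have h1 := integral_mul_eq_integral_tail_mul (by norm_num)
      (intervalIntegrable_peanoKernel x t s (-1) 1) h0 (H := fun y => Q.eval y)
      (q.continuous.intervalIntegrable _ _)
      fun y _ => by simpa only [hQ] using eval_eq_add_integral_derivative Q (-1) y
    rw [ih Q (by omega)] at h1
    exact h1.symm

theorem integral_peanoKernel (hx : Function.Injective x)
    (hmem : ∀ i, x i ∈ Set.Icc (-1 : ℝ) 1) (ht : t ∈ Set.Icc (-1 : ℝ) 1) {s : ℕ}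
    (hs : s + 1 < n) : ∫ y in (-1 : ℝ)..1, peanoKernel x t s y = 0 := by
  simpa using integral_peanoKernel_mul_eval hx hmem ht s 1 (by simpa using hs)

theorem abs_peanoKernel_zero_le (hn : 0 < n) (hx : Function.Injective x) {M : ℝ} (hM0 : 0 ≤ M)
    (hM : ∀ k, |lagBasis x k t| ≤ M) (hnode : ∀ i, t ≠ x i) (y : ℝ) :
    |peanoKernel x t 0 y| ≤ M := by
  rcases lt_or_ge y t with hy | hy
  · have h1 : peanoKernel x t 0 y = ∑ k, (if x k ≤ y then 1 else 0) * lagBasis x k t := by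
      simp only [peanoKernel, if_pos hy]
      nth_rw 1 [← sum_lagBasis hn hx t]
      rw [← sum_sub_distrib]
      refine sum_congr rfl fun k _ => ?_
      rcases lt_or_ge y (x k) with h | h
      · simp [h, h.not_ge]
      · simp [h, h.not_gt]
    rw [h1]
    refine abs_sum_lagBasis_le hx (fun k => x k ≤ y) (-1) t (by norm_num) ?_ ?_ hnode hM0 hM
    · intro i j hi hj
      linarith [not_le.mp hj]
    · intro i hi
      linarith
  · have h1 : peanoKernel x t 0 y = -∑ k, (if y < x k then 1 else 0) * lagBasis x k t := by
      simp only [peanoKernel, if_neg hy.not_gt, zero_sub, mul_comm]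
    rw [h1, abs_neg]
    refine abs_sum_lagBasis_le hx (fun k => y < x k) 1 t (by norm_num) ?_ ?_ hnode hM0 hM
    · intro i j hi hj
      linarith [not_lt.mp hj]
    · intro i hi
      linarith

theorem abs_peanoKernel_le (hx : Function.Injective x)
    (hmem : ∀ i, x i ∈ Set.Icc (-1 : ℝ) 1) (ht : t ∈ Set.Icc (-1 : ℝ) 1) {M : ℝ} (hM0 : 0 ≤ M)
    (hM : ∀ k, |lagBasis x k t| ≤ M) (hnode : ∀ i, t ≠ x i) (s : ℕ) (hs : s < n) :
    ∀ y ∈ Set.Icc (-1 : ℝ) 1,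
      |peanoKernel x t s y| ≤ M * ∏ i ∈ range s, (Real.pi / ((n : ℝ) - 1 - i)) := by
  induction s with
  | zero =>
    intro y _
    simpa using abs_peanoKernel_zero_le hs hx hM0 hM hnode y
  | succ s ih =>
    intro u hu
    have ih := ih (by omega)
    have hcast : ((n - 1 - s : ℕ) : ℝ) = (n : ℝ) - 1 - s := by
      rw [Nat.cast_sub (by omega), Nat.cast_sub (by omega), Nat.cast_one]
    rw [prod_range_succ, ← mul_assoc, ← hcast]
    have hlip : ∀ a b, peanoKernel x t (s + 1) a - peanoKernel x t (s + 1) b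
        = ∫ y in a..b, peanoKernel x t s y := by
      intro a b
      have hi := intervalIntegrable_peanoKernel x t s
      rw [sub_eq_iff_eq_add]
      exact (intervalIntegral.integral_add_adjacent_intervals (hi a b) (hi b 1)).symm
    refine abs_le_of_orthogonal_of_lipschitz (continuous_peanoKernel_succ x t s)
      (N := n - 1 - s) (by omega) ((abs_nonneg _).trans (ih u hu)) ?_ ?_ ?_ ?_ hu
    · exact intervalIntegral.integral_same
    · exact integral_peanoKernel hx hmem ht hs
    · intro a ha b hb
      rw [hlip, abs_sub_comm, ← Real.norm_eq_abs]
      refine intervalIntegral.norm_integral_le_of_norm_le_const fun y hy => ih y ?_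
      exact Set.uIcc_subset_Icc ha hb (Set.uIoc_subset_uIcc hy)
    · intro q hq
      exact integral_peanoKernel_mul_eval hx hmem ht (s + 1) q (by omega)

theorem sub_lagInterp_eq_integral_peanoKernel_iterated (hx : Function.Injective x)
    (hmem : ∀ i, x i ∈ Set.Icc (-1 : ℝ) 1) (ht : t ∈ Set.Icc (-1 : ℝ) 1) (h : ℕ → ℝ → ℝ)
    (s : ℕ) (hs : s < n) (hint : ∀ k ≤ s, IntervalIntegrable (h (k + 1)) volume (-1) 1)
    (hh : ∀ k ≤ s, ∀ y ∈ Set.Icc (-1 : ℝ) 1,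
      h k y = h k (-1) + ∫ z in (-1 : ℝ)..y, h (k + 1) z) :
    h 0 t - lagInterp x (h 0) t = ∫ y in (-1 : ℝ)..1, peanoKernel x t s y * h (s + 1) y := by
  induction s with
  | zero =>
    exact sub_lagInterp_eq_integral_peanoKernel hs hx hmem ht (hint 0 le_rfl) (hh 0 le_rfl)
  | succ s ih =>
    rw [ih (by omega) (fun k hk => hint k (by omega)) (fun k hk => hh k (by omega)),
      integral_mul_eq_integral_tail_mul (by norm_num)
        (intervalIntegrable_peanoKernel x t s (-1) 1) (integral_peanoKernel hx hmem ht hs)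
        (hint (s + 1) le_rfl) (hh (s + 1) le_rfl)]
    rfl

end PeanoKernel

theorem iteratedDeriv_eq_add_integral {f : ℝ → ℝ} {m k : ℕ} (hf : ContDiff ℝ m f) (hk : k < m)
    (a y : ℝ) :
    iteratedDeriv k f y = iteratedDeriv k f a + ∫ z in a..y, iteratedDeriv (k + 1) f z := by
  have hc : Continuous (iteratedDeriv (k + 1) f) :=
    hf.continuous_iteratedDeriv (k + 1) (by exact_mod_cast hk)
  rw [intervalIntegral.integral_eq_sub_of_hasDerivAt (f := iteratedDeriv k f) ?_
    (hc.intervalIntegrable _ _)]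
  · ring
  · intro z _
    rw [iteratedDeriv_succ]
    exact (hf.differentiable_iteratedDeriv k (by exact_mod_cast hk) z).hasDerivAt

theorem stmt19 {n r : ℕ} (hr : 1 ≤ r) (hn : r + 1 ≤ n)
    (x : Fin n → ℝ)
    (hdec : ∀ i j : Fin n, i < j → x j < x i)
    (hmem : ∀ i, x i ∈ Set.Icc (-1 : ℝ) 1)
    (c : ℝ) (hc : 0 < c)
    (hsn : ∀ k : Fin n, ∀ t ∈ Set.Icc (-1 : ℝ) 1, c ≤ fejerV x k t)
    (f g : ℝ → ℝ) (V : ℝ)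
    (hf : ContDiff ℝ (r - 1) f)
    (hg : IntegrableOn g (Set.Icc (-1 : ℝ) 1))
    (hBV : BoundedVariationOn g (Set.Icc (-1 : ℝ) 1))
    (hV : (eVariationOn g (Set.Icc (-1 : ℝ) 1)).toReal = V)
    (hrep : ∀ t ∈ Set.Icc (-1 : ℝ) 1,
      iteratedDeriv (r - 1) f t = iteratedDeriv (r - 1) f (-1) + ∫ y in (-1 : ℝ)..t, g y) :
    ∀ t ∈ Set.Icc (-1 : ℝ) 1,
      |f t - lagInterp x f t| ≤
        Real.pi ^ r * V /
          (Real.sqrt c * ∏ i ∈ Finset.range r, ((n : ℝ) - 1 - i)) := by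
  intro t ht
  have hx : Function.Injective x := by
    intro i j hij
    rcases lt_trichotomy i j with h | h | h
    · exact absurd hij (hdec i j h).ne'
    · exact h
    · exact absurd hij (hdec j i h).ne
  have hV0 : 0 ≤ V := hV ▸ ENNReal.toReal_nonneg
  have hfac : ∀ i ∈ range r, 0 < (n : ℝ) - 1 - i := by
    intro i hi
    have h1 : ((i + 1 : ℕ) : ℝ) < n := by exact_mod_cast (by have := mem_range.mp hi; omega)
    push_cast at h1
    linarith
  by_cases hnode : ∃ k, t = x k
  · obtain ⟨k, rfl⟩ := hnode
    rw [lagInterp_node hx, sub_self, abs_zero]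
    have := prod_pos hfac
    positivity
  push Not at hnode
  have hlag : ∀ k, |lagBasis x k t| ≤ 1 / √c :=
    abs_lagBasis_le_of_stronglyNormal hx hc fun k => hsn k t ht
  obtain ⟨s, rfl⟩ : ∃ s, r = s + 1 := ⟨r - 1, by omega⟩
  have hf' : ContDiff ℝ s f := by
    have h : ((s + 1 : ℕ) : WithTop ℕ∞) - 1 = s := by
      change (((s + 1 : ℕ) : ℕ∞) : WithTop ℕ∞) - ((1 : ℕ∞) : WithTop ℕ∞) = ((s : ℕ∞) : WithTop ℕ∞)
      rw [← WithTop.coe_sub]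
      norm_cast
    rwa [h] at hf
  simp only [Nat.add_sub_cancel] at hrep
  have hg' : IntervalIntegrable g volume (-1) 1 := by
    rw [intervalIntegrable_iff_integrableOn_Icc_of_le (by norm_num)]
    exact hg
  have herr : f t - lagInterp x f t = ∫ y in (-1 : ℝ)..1, peanoKernel x t s y * g y := by
    have h := sub_lagInterp_eq_integral_peanoKernel_iterated hx hmem ht
      (fun k => if k ≤ s then iteratedDeriv k f else g) s (by omega) ?_ ?_
    · simpa using h
    · intro k hk
      rcases hk.lt_or_eq with h | rfl
      · simp only [if_pos (Nat.succ_le_of_lt h)]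
        exact (hf'.continuous_iteratedDeriv (k + 1) (by exact_mod_cast h)).intervalIntegrable _ _
      · simpa using hg'
    · intro k hk y hy
      rcases hk.lt_or_eq with h | rfl
      · simp only [if_pos hk, if_pos (Nat.succ_le_of_lt h)]
        exact iteratedDeriv_eq_add_integral hf' h _ _
      · simpa using hrep y hy
  have hM : (0 : ℝ) ≤ 1 / √c := by positivity
  have hbound := abs_integral_mul_le_variation (by norm_num)
    (intervalIntegrable_peanoKernel x t s (-1) 1) (integral_peanoKernel hx hmem ht (by omega))
    (abs_peanoKernel_le hx hmem ht hM hlag hnode s (by omega))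
    (abs_peanoKernel_le hx hmem ht hM hlag hnode (s + 1) (by omega))
    (intervalIntegrable_peanoKernel_mul hg' x t s) hBV
  rw [herr]
  refine hbound.trans_eq ?_
  rw [hV, prod_div_distrib, prod_const, card_range, div_mul_div_comm, one_mul, div_mul_eq_mul_div]
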